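/- Let Σ be a complete unimodular fan in N_ℝ and f ∈ PL(Σ). For m ∈ M let Σ_{f,m} = {σ ∈ Σ : m(x) ≤ f(x) for all x ∈ σ}. Then there are only finitely many m ∈ M for which ∑_{σ ∈ Σ_{f,m}} (−1)^{dim σ} ≠ 0. -/

import Mathlib

open scoped BigOperators Pointwise

namespace EhrhartFormalization

/-- The ambient real vector space `N_ℝ ≅ ℝⁿ`, with lattice `N = ℤⁿ`. -/
abbrev V (n : ℕ) : Type := Fin n → ℝ

/-- The real point associated to a lattice point. -/
def toR {n : ℕ} (u : Fin n → ℤ) : V n := fun i => (u i : ℝ)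

/-- The pairing of an integral linear functional `m ∈ M` with a point of `N_ℝ`. -/
def pairR {n : ℕ} (m : Fin n → ℤ) (v : V n) : ℝ := ∑ i, (m i : ℝ) * v i

/-- The pairing of an integral linear functional with a lattice point. -/
def pairZ {n : ℕ} (m u : Fin n → ℤ) : ℤ := ∑ i, m i * u i

/-- A rational cone: a finite intersection of closed rational halfspaces. -/
def IsRationalCone {n : ℕ} (σ : Set (V n)) : Prop :=
  ∃ s : Finset (Fin n → ℤ), σ = {v | ∀ m ∈ s, 0 ≤ pairR m v}

/-- `τ` is a face of `σ`: it is cut out by an integral linear functional that is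
nonpositive on `σ`. -/
def IsFaceOf {n : ℕ} (τ σ : Set (V n)) : Prop :=
  ∃ m : Fin n → ℤ, (∀ v ∈ σ, pairR m v ≤ 0) ∧ τ = {v ∈ σ | pairR m v = 0}

/-- A rational fan in `N_ℝ`. -/
structure RationalFan (n : ℕ) where
  cones : Set (Set (V n))
  finite : cones.Finite
  rational : ∀ σ ∈ cones, IsRationalCone σ
  face_mem : ∀ σ ∈ cones, ∀ τ : Set (V n), IsFaceOf τ σ → τ ∈ cones
  inter_face : ∀ σ₁ ∈ cones, ∀ σ₂ ∈ cones, IsFaceOf (σ₁ ∩ σ₂) σ₁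

/-- The support of a fan: the union of its cones. -/
def RationalFan.support {n : ℕ} (S : RationalFan n) : Set (V n) := ⋃ σ ∈ S.cones, σ

/-- The dimension of a cone. -/
noncomputable def dimCone {n : ℕ} (σ : Set (V n)) : ℕ :=
  Module.finrank ℝ (Submodule.span ℝ σ)

/-- The set `Σ(k)` of `k`-dimensional cones of a fan. -/
def RationalFan.conesDim {n : ℕ} (S : RationalFan n) (k : ℕ) : Set (Set (V n)) :=
  {σ | σ ∈ S.cones ∧ dimCone σ = k}

/-- The rays (`1`-dimensional cones) of a fan. -/
def RationalFan.rays {n : ℕ} (S : RationalFan n) : Set (Set (V n)) :=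
  S.conesDim 1

/-- The dimension of a fan: the largest dimension of any of its cones. -/
noncomputable def RationalFan.dim {n : ℕ} (S : RationalFan n) : ℕ :=
  sSup (dimCone '' S.cones)

/-- `u` is the primitive ray generator of the ray `ρ`: the lattice point of `ρ`
generating `ρ ∩ N` as a monoid. -/
def IsRayGenOf {n : ℕ} (ρ : Set (V n)) (u : Fin n → ℤ) : Prop :=
  toR u ∈ ρ ∧ u ≠ 0 ∧ ∀ w : Fin n → ℤ, toR w ∈ ρ → ∃ c : ℕ, w = c • u

open Classical in
/-- The primitive generator of a ray (junk value `0` if none exists). -/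
noncomputable def rayGen {n : ℕ} (ρ : Set (V n)) : Fin n → ℤ :=
  if h : ∃ u, IsRayGenOf ρ u then h.choose else 0

/-- A unimodular cone: generated by part of a `ℤ`-basis of the lattice. -/
def IsUnimodularCone {n : ℕ} (σ : Set (V n)) : Prop :=
  ∃ (b : Module.Basis (Fin n) ℤ (Fin n → ℤ)) (k : ℕ), k ≤ n ∧
    σ = {v | ∃ c : Fin n → ℝ, (∀ i, 0 ≤ c i) ∧ (∀ i : Fin n, k ≤ (i : ℕ) → c i = 0) ∧
          v = ∑ i, c i • toR (b i)}

/-- A unimodular fan: a pointed fan all of whose cones are unimodular. -/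
def IsUnimodular {n : ℕ} (S : RationalFan n) : Prop :=
  ({0} : Set (V n)) ∈ S.cones ∧ ∀ σ ∈ S.cones, IsUnimodularCone σ

/-- A complete fan: its support is all of `N_ℝ`. -/
def IsComplete {n : ℕ} (S : RationalFan n) : Prop := S.support = Set.univ

/-- For a unimodular fan, `PL(Σ) = ℤ^{Σ(1)}`; this is the element of `PL(Σ)`
obtained by restricting an integral linear function `m ∈ M`, recorded by its
values at the primitive ray generators. -/
noncomputable def linPL {n : ℕ} (S : RationalFan n) (m : Fin n → ℤ) : ↥S.rays → ℤ :=
  fun ρ => pairZ m (rayGen (ρ : Set (V n)))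

open Classical in
/-- The Courant function of a ray: value `1` at `u_ρ₀` and `0` at other ray generators. -/
noncomputable def courant {n : ℕ} (S : RationalFan n) (ρ₀ : ↥S.rays) : ↥S.rays → ℤ :=
  fun ρ => if ρ = ρ₀ then 1 else 0

/-- The neighborhood `Σ^{(σ)}` of a cone: all cones contained in a cone containing `σ`. -/
def RationalFan.nbhd {n : ℕ} (S : RationalFan n) (σ : Set (V n)) : Set (Set (V n)) :=
  {τ | τ ∈ S.cones ∧ ∃ σ' ∈ S.cones, σ ⊆ σ' ∧ τ ⊆ σ'}

/-- `T` is the star fan of `S` at the cone `σ`, realized via the lattice-compatible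
surjection `π` whose kernel is the span of `σ`. -/
def IsStarMap {n m : ℕ} (S : RationalFan n) (σ : Set (V n)) (π : V n →ₗ[ℝ] V m)
    (T : RationalFan m) : Prop :=
  Function.Surjective π ∧
  (∀ u : Fin n → ℤ, ∃ w : Fin m → ℤ, π (toR u) = toR w) ∧
  (∀ w : Fin m → ℤ, ∃ u : Fin n → ℤ, π (toR u) = toR w) ∧
  LinearMap.ker π = Submodule.span ℝ σ ∧
  T.cones = (Set.image π) '' S.nbhd σ

/-- The recursive system of conditions defining Ehrhart fans: `χ` descends to
`uPL(Σ) = PL(Σ)/L(Σ)`, is normalized by `χ(0) = 1`, and for every ray `ρ` there is a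
star fan (with its own Ehrhart function `χT`, recursively) along which the Ehrhart
recursion `χ([f]) = χ([f - δ_ρ]) + χ_{Σ^ρ}([f]^ρ)` holds, where `[f]^ρ` is computed
by subtracting an integral linear function `m₀` agreeing with `f` on `ρ` and pushing
down to the star fan. -/
def EhrhartRec : (n : ℕ) → (S : RationalFan n) → ((↥S.rays → ℤ) → ℤ) → Prop
  | 0, S, χ =>
      (∀ (f : ↥S.rays → ℤ) (m : Fin 0 → ℤ), χ (f + linPL S m) = χ f) ∧ χ 0 = 1
  | (n + 1), S, χ =>
      (∀ (f : ↥S.rays → ℤ) (m : Fin (n + 1) → ℤ), χ (f + linPL S m) = χ f) ∧ χ 0 = 1 ∧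
      ∀ ρ : ↥S.rays, ∃ (π : V (n + 1) →ₗ[ℝ] V n) (T : RationalFan n)
          (χT : (↥T.rays → ℤ) → ℤ),
        IsStarMap S (ρ : Set (V (n + 1))) π T ∧ IsUnimodular T ∧ EhrhartRec n T χT ∧
        ∀ f : ↥S.rays → ℤ, ∃ (m₀ : Fin (n + 1) → ℤ) (g : ↥T.rays → ℤ),
          pairZ m₀ (rayGen (ρ : Set (V (n + 1)))) = f ρ ∧
          (∀ (ρ' : ↥S.rays) (ρT : ↥T.rays),
              π '' (ρ' : Set (V (n + 1))) = (ρT : Set (V n)) →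
              g ρT = f ρ' - pairZ m₀ (rayGen (ρ' : Set (V (n + 1))))) ∧
          χ f = χ (f - courant S ρ) + χT g

/-- A unimodular fan is Ehrhart if it admits an Ehrhart function satisfying the
Ehrhart recursion (together, recursively, with all of its star fans). -/
def IsEhrhart {n : ℕ} (S : RationalFan n) : Prop :=
  IsUnimodular S ∧ ∃ χ : (↥S.rays → ℤ) → ℤ, EhrhartRec n S χ

/-- An integral piecewise-linear function on a fan (recorded as a function on all of
`N_ℝ`, constrained on each cone of the fan). -/
def IsPLFun {n : ℕ} (S : RationalFan n) (φ : V n → ℝ) : Prop :=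
  ∀ σ ∈ S.cones, ∃ m : Fin n → ℤ, ∀ v ∈ σ, φ v = pairR m v
/-- The subfan `Σ_{f,m} = {σ ∈ Σ : m(x) ≤ f(x) for all x ∈ σ}`. -/
def subfanLE {n : ℕ} (S : RationalFan n) (φ : V n → ℝ) (m : Fin n → ℤ) :
    Set (Set (V n)) :=
  {σ | σ ∈ S.cones ∧ ∀ x ∈ σ, pairR m x ≤ φ x}

/-- Cone spanned by the members of a basis indexed by `I`. -/
def coneOf {n : ℕ} (B : Module.Basis (Fin n) ℝ (V n)) (I : Finset (Fin n)) : Set (V n) :=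
  {v | (∀ i, 0 ≤ B.repr v i) ∧ ∀ i, i ∉ I → B.repr v i = 0}

lemma pairR_add {n : ℕ} (m : Fin n → ℤ) (v w : V n) :
    pairR m (v + w) = pairR m v + pairR m w := by
  simp [pairR, mul_add, Finset.sum_add_distrib]

lemma pairR_smul {n : ℕ} (m : Fin n → ℤ) (c : ℝ) (v : V n) :
    pairR m (c • v) = c * pairR m v := by
  simp only [pairR, Pi.smul_apply, smul_eq_mul, Finset.mul_sum]
  exact Finset.sum_congr rfl fun _ _ => by ring

/-- `pairR` as a linear map. -/
def pairL {n : ℕ} (m : Fin n → ℤ) : V n →ₗ[ℝ] ℝ where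
  toFun := pairR m
  map_add' := pairR_add m
  map_smul' := by intro c v; simp [pairR_smul]

lemma pairR_expand {n : ℕ} (m : Fin n → ℤ) (B : Module.Basis (Fin n) ℝ (V n)) (v : V n) :
    pairR m v = ∑ i, B.repr v i * pairR m (B i) := by
  change pairL m v = ∑ i, B.repr v i * pairL m (B i)
  conv_lhs => rw [← B.sum_repr v]
  rw [map_sum]
  exact Finset.sum_congr rfl fun i _ => by rw [map_smul, smul_eq_mul]

lemma unimod_data {n : ℕ} (σ : Set (V n)) (h : IsUnimodularCone σ) :
    ∃ (B : Module.Basis (Fin n) ℝ (V n)) (K : Finset (Fin n)), σ = coneOf B K ∧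
      ∀ i, ∃ m : Fin n → ℤ, ∀ v, B.repr v i = pairR m v := by
  obtain ⟨b, k, hk, hσ⟩ := h
  let mm : Fin n → Fin n → ℤ := fun i j => b.repr (Pi.single j 1) i
  have hmm : ∀ i (u : Fin n → ℤ), pairR (mm i) (toR u) = (b.repr u i : ℝ) := by
    intro i u
    have : b.repr u i = ∑ j, mm i j * u j := by
      have h1 : u = ∑ j, u j • (Pi.single j 1 : Fin n → ℤ) := by
        ext t; simp [Finset.sum_apply, Pi.single_apply]
      conv_lhs => rw [h1]
      rw [map_sum, Finsupp.finsetSum_apply]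
      refine Finset.sum_congr rfl fun j _ => ?_
      rw [map_smul, Finsupp.smul_apply, smul_eq_mul, mul_comm]
    rw [this]; simp [pairR, toR]
  have hd : ∀ i j, pairR (mm i) (toR (b j)) = if j = i then 1 else 0 := by
    intro i j
    rw [hmm]; simp [Finsupp.single_apply]
  have hsum : ∀ (c : Fin n → ℝ) i, pairL (mm i) (∑ j, c j • toR (b j)) = c i := by
    intro c i
    have : ∀ j, pairL (mm i) (toR (b j)) = if j = i then 1 else 0 := hd i
    simp [this]
  have hli : LinearIndependent ℝ (fun j => toR (b j)) := by
    rw [Fintype.linearIndependent_iff]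
    intro g hg i
    rw [← hsum g i, hg]; simp
  let B : Module.Basis (Fin n) ℝ (V n) :=
    basisOfLinearIndependentOfCardEqFinrank' _ hli (by simp)
  have hB : ∀ i, B i = toR (b i) := fun i => by simp [B]
  have hr : ∀ v i, B.repr v i = pairR (mm i) v := by
    intro v i
    have := hsum (fun j => B.repr v j) i
    rw [← this]
    simp only [← hB]
    rw [B.sum_repr]; rfl
  refine ⟨B, Finset.univ.filter (fun i : Fin n => (i : ℕ) < k), ?_, fun i => ⟨mm i, fun v => hr v i⟩⟩
  rw [hσ]
  ext v
  constructor
  · rintro ⟨c, h0, h1, rfl⟩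
    have : ∀ i, B.repr (∑ i, c i • toR (b i)) i = c i := fun i => by
      rw [hr]; exact hsum c i
    refine ⟨fun i => by rw [this]; exact h0 i, fun i hi => by rw [this]; exact h1 i (by simpa using hi)⟩
  · rintro ⟨h0, h1⟩
    refine ⟨fun i => B.repr v i, h0, fun i hi => h1 i (by simpa using hi), ?_⟩
    simp only [← hB]
    rw [B.sum_repr]

lemma basis_mem_coneOf {n : ℕ} (B : Module.Basis (Fin n) ℝ (V n)) (I : Finset (Fin n)) (i : Fin n) :
    B i ∈ coneOf B I ↔ i ∈ I := by
  constructor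
  · rintro ⟨_, h⟩
    by_contra hi
    simpa using h i hi
  · intro hi
    refine ⟨fun j => ?_, fun j hj => ?_⟩
    · simp only [Module.Basis.repr_self, Finsupp.single_apply]; split_ifs <;> norm_num
    · rw [Module.Basis.repr_self, Finsupp.single_apply, if_neg]
      rintro rfl; exact hj hi

lemma coneOf_inj {n : ℕ} (B : Module.Basis (Fin n) ℝ (V n)) {I J : Finset (Fin n)}
    (h : coneOf B I = coneOf B J) : I = J := by
  ext i
  rw [← basis_mem_coneOf B I, ← basis_mem_coneOf B J, h]

lemma dim_coneOf {n : ℕ} (B : Module.Basis (Fin n) ℝ (V n)) (I : Finset (Fin n)) :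
    dimCone (coneOf B I) = I.card := by
  have : Submodule.span ℝ (coneOf B I) = Submodule.span ℝ (Set.range fun i : I => B i) := by
    apply le_antisymm
    · rw [Submodule.span_le]
      intro v hv
      rw [← B.sum_repr v]
      refine Submodule.sum_mem _ fun i _ => ?_
      by_cases hi : i ∈ I
      · exact Submodule.smul_mem _ _ (Submodule.subset_span ⟨⟨i, hi⟩, rfl⟩)
      · rw [hv.2 i hi]; simp
    · apply Submodule.span_mono
      rintro _ ⟨i, rfl⟩
      exact (basis_mem_coneOf B I i).2 i.2
  rw [dimCone, this]
  have h2 := finrank_span_eq_card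
    (B.linearIndependent.comp (Subtype.val : I → Fin n) Subtype.val_injective)
  rw [Fintype.card_coe] at h2
  exact h2

lemma face_coneOf {n : ℕ} (B : Module.Basis (Fin n) ℝ (V n)) (K I : Finset (Fin n)) (hI : I ⊆ K)
    (hB : ∀ i, ∃ m : Fin n → ℤ, ∀ v, B.repr v i = pairR m v) :
    IsFaceOf (coneOf B I) (coneOf B K) := by
  choose mm hm using hB
  have key : ∀ v, pairR (-∑ i ∈ K \ I, mm i) v = - ∑ i ∈ K \ I, B.repr v i := by
    intro v
    simp only [hm, pairR, Pi.neg_apply, Finset.sum_apply, Int.cast_neg, Int.cast_sum, neg_mul,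
      Finset.sum_mul, Finset.sum_neg_distrib]
    rw [Finset.sum_comm]
  refine ⟨-∑ i ∈ K \ I, mm i, fun v hv => ?_, ?_⟩
  · rw [key]
    exact neg_nonpos.2 (Finset.sum_nonneg fun i _ => hv.1 i)
  · ext v
    simp only [Set.mem_ofPred_eq, key, neg_eq_zero]
    constructor
    · rintro ⟨h0, h1⟩
      refine ⟨⟨h0, fun i hi => h1 i fun h => hi (hI h)⟩, Finset.sum_eq_zero fun i hi => h1 i ?_⟩
      exact (Finset.mem_sdiff.1 hi).2
    · rintro ⟨⟨h0, h1⟩, h2⟩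
      refine ⟨h0, fun i hi => ?_⟩
      by_cases hK : i ∈ K
      · exact (Finset.sum_eq_zero_iff_of_nonneg fun i _ => h0 i).1 h2 i
          (Finset.mem_sdiff.2 ⟨hK, hi⟩)
      · exact h1 i hK

lemma pair_term_nonpos {n : ℕ} (B : Module.Basis (Fin n) ℝ (V n)) (K : Finset (Fin n))
    (m : Fin n → ℤ) (h : ∀ v ∈ coneOf B K, pairR m v ≤ 0) (v : V n) (hv : v ∈ coneOf B K) (i : Fin n) :
    B.repr v i * pairR m (B i) ≤ 0 := by
  by_cases hi : i ∈ K
  · exact mul_nonpos_of_nonneg_of_nonpos (hv.1 i) (h _ ((basis_mem_coneOf B K i).2 hi))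
  · rw [hv.2 i hi]; simp

lemma pair_zero_terms {n : ℕ} (B : Module.Basis (Fin n) ℝ (V n)) (K : Finset (Fin n))
    (m : Fin n → ℤ) (h : ∀ v ∈ coneOf B K, pairR m v ≤ 0) (v : V n) (hv : v ∈ coneOf B K)
    (h0 : pairR m v = 0) (i : Fin n) :
    B.repr v i * pairR m (B i) = 0 := by
  rw [pairR_expand m B v] at h0
  exact (Finset.sum_eq_zero_iff_of_nonpos fun i _ => pair_term_nonpos B K m h v hv i).1 h0 i
    (Finset.mem_univ i)

lemma face_is_coneOf {n : ℕ} (B : Module.Basis (Fin n) ℝ (V n)) (K : Finset (Fin n))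
    (τ : Set (V n)) (h : IsFaceOf τ (coneOf B K)) : ∃ I, I ⊆ K ∧ τ = coneOf B I := by
  classical
  obtain ⟨m, hm, rfl⟩ := h
  refine ⟨K.filter fun i => pairR m (B i) = 0, Finset.filter_subset _ _, ?_⟩
  ext v
  constructor
  · rintro ⟨hv, h0⟩
    refine ⟨hv.1, fun i hi => ?_⟩
    by_cases hK : i ∈ K
    · rcases mul_eq_zero.1 (pair_zero_terms B K m hm v hv h0 i) with h | h
      · exact h
      · exact absurd (Finset.mem_filter.2 ⟨hK, h⟩) hi
    · exact hv.2 i hK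
  · rintro ⟨h0, h1⟩
    refine ⟨⟨h0, fun i hi => h1 i fun h => hi (Finset.mem_filter.1 h).1⟩, ?_⟩
    rw [pairR_expand m B v]
    refine Finset.sum_eq_zero fun i _ => ?_
    by_cases hi : i ∈ K.filter fun i => pairR m (B i) = 0
    · rw [(Finset.mem_filter.1 hi).2, mul_zero]
    · rw [h1 i hi, zero_mul]

lemma face_pos {n : ℕ} (B : Module.Basis (Fin n) ℝ (V n)) (K : Finset (Fin n))
    (τ : Set (V n)) (h : IsFaceOf τ (coneOf B K)) (x : V n) (hx : x ∈ τ)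
    (hp : ∀ i ∈ K, 0 < B.repr x i) : τ = coneOf B K := by
  obtain ⟨I, hI, rfl⟩ := face_is_coneOf B K τ h
  congr 1
  refine Finset.Subset.antisymm hI fun i hi => ?_
  by_contra hn
  exact (hp i hi).ne' (hx.2 i hn)

/-- sum of generators -/
noncomputable def bary {n : ℕ} (B : Module.Basis (Fin n) ℝ (V n)) (I : Finset (Fin n)) : V n :=
  ∑ i ∈ I, B i

lemma repr_bary {n : ℕ} (B : Module.Basis (Fin n) ℝ (V n)) (I : Finset (Fin n)) (i : Fin n) :
    B.repr (bary B I) i = if i ∈ I then 1 else 0 := by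
  classical
  simp [bary, Finsupp.finsetSum_apply, Finsupp.single_apply]

lemma bary_mem {n : ℕ} (B : Module.Basis (Fin n) ℝ (V n)) (I : Finset (Fin n)) :
    bary B I ∈ coneOf B I := by
  refine ⟨fun i => ?_, fun i hi => ?_⟩ <;> rw [repr_bary]
  · split_ifs <;> norm_num
  · simp [hi]

open Filter Topology in
lemma ev_pos (a c : ℝ) (ha : 0 < a) : ∀ᶠ ε in 𝓝[>] (0 : ℝ), 0 < a + ε * c := by
  have : Tendsto (fun ε : ℝ => a + ε * c) (𝓝 0) (𝓝 a) := by
    have : Continuous (fun ε : ℝ => a + ε * c) := by fun_prop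
    simpa using this.tendsto 0
  exact (this.eventually (lt_mem_nhds ha)).filter_mono nhdsWithin_le_nhds

open Filter Topology in
lemma ev_pos2 (a c : ℝ) (ha : 0 ≤ a) (h : 0 < a ∨ 0 < c) :
    ∀ᶠ ε in 𝓝[>] (0 : ℝ), 0 < a + ε * c := by
  rcases h with h | h
  · exact ev_pos a c h
  · filter_upwards [self_mem_nhdsWithin] with ε hε
    have : 0 < ε * c := mul_pos hε h
    linarith

open Filter Topology in
lemma ev_ne (a c : ℝ) (hc : a ≠ 0 ∨ c ≠ 0) : ∀ᶠ ε in 𝓝[>] (0 : ℝ), a + ε * c ≠ 0 := by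
  rcases lt_trichotomy a 0 with h | h | h
  · filter_upwards [ev_pos (-a) (-c) (by linarith)] with ε h
    intro h'; linarith
  · subst h
    filter_upwards [self_mem_nhdsWithin] with ε hε
    have : ε ≠ 0 := ne_of_gt hε
    simpa [this] using hc
  · filter_upwards [ev_pos a c h] with ε h
    exact h.ne'

open Filter Topology in
lemma freq_nonneg (a c : ℝ) (h : ∃ᶠ ε in 𝓝[>] (0 : ℝ), 0 ≤ a + ε * c) :
    0 ≤ a ∧ (c < 0 → 0 < a) := by
  constructor
  · by_contra ha
    obtain ⟨ε, h1, h2⟩ := (h.and_eventually (ev_pos (-a) (-c) (by linarith))).exists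
    linarith
  · intro hc
    by_contra ha
    obtain ⟨ε, h1, h2⟩ :=
      (h.and_eventually (ev_pos2 (-a) (-c) (by linarith) (Or.inr (by linarith)))).exists
    linarith

lemma sum_Icc_zero {n : ℕ} (N A : Finset (Fin n)) (h : N ≠ A) :
    ∑ I ∈ Finset.Icc N A, (-1 : ℤ) ^ I.card = 0 := by
  by_cases hs : N ⊆ A
  · obtain ⟨a, haA, haN⟩ := Finset.exists_of_ssubset (lt_of_le_of_ne hs h)
    refine Finset.sum_involution (fun I _ => if a ∈ I then I.erase a else insert a I) ?_ ?_ ?_ ?_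
    · intro I _
      by_cases ha : a ∈ I
      · simp only [ha, if_true]
        have := Finset.card_erase_add_one ha
        rw [← this, pow_succ]; ring
      · simp only [ha, if_false]
        rw [Finset.card_insert_of_notMem ha, pow_succ]; ring
    · intro I _ _
      by_cases ha : a ∈ I
      · simp only [ha, if_true]; intro h; rw [← h] at ha; simp at ha
      · simp only [ha, if_false]; intro h; rw [← h] at ha; simp at ha
    · intro I hI
      rw [Finset.mem_Icc] at hI ⊢
      by_cases ha : a ∈ I
      · simp only [ha, if_true]
        refine ⟨fun i hi => Finset.mem_erase.2 ⟨?_, hI.1 hi⟩, (Finset.erase_subset _ _).trans hI.2⟩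
        rintro rfl; exact haN hi
      · simp only [ha, if_false]
        exact ⟨hI.1.trans (Finset.subset_insert _ _), Finset.insert_subset haA hI.2⟩
    · intro I _
      by_cases ha : a ∈ I
      · simp [ha]
      · simp [ha]
  · rw [Finset.Icc_eq_empty hs]; simp

open Classical Filter Topology in
lemma lower_bound {n : ℕ} (S : RationalFan n) (hc : IsComplete S)
    (φ : V n → ℝ) (hφ : IsPLFun S φ)
    (B : Set (V n) → Module.Basis (Fin n) ℝ (V n)) (K : Set (V n) → Finset (Fin n))
    (hBK : ∀ σ ∈ S.cones, σ = coneOf (B σ) (K σ))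
    (hint : ∀ σ ∈ S.cones, ∀ i, ∃ m : Fin n → ℤ, ∀ v, (B σ).repr v i = pairR m v)
    (v : V n) (hv : ∀ σ ∈ S.cones, ∀ i, (B σ).repr v i ≠ 0) :
    ∃ C : ℝ, ∀ m : Fin n → ℤ,
      (∑ᶠ σ ∈ subfanLE S φ m, (-1 : ℤ) ^ dimCone σ) ≠ 0 → C ≤ pairR m v := by
  choose! mσ hmσ using hφ
  let G : Set (V n) → Set (V n) → Prop := fun τ σ =>
    K σ = Finset.univ ∧ ∃ I, τ = coneOf (B σ) I ∧ ∀ i, (B σ).repr v i < 0 → i ∈ I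
  have hex : ∀ τ ∈ S.cones, ∃ σ ∈ S.cones, G τ σ := by
    intro τ hτ
    set x := bary (B τ) (K τ) with hxdef
    have hxτ : x ∈ τ := by
      rw [hBK τ hτ]; exact bary_mem _ _
    obtain ⟨σ, hσ, hf⟩ : ∃ σ ∈ S.cones, ∃ᶠ ε in 𝓝[>] (0 : ℝ), x + ε • v ∈ σ := by
      by_contra hcon
      push Not at hcon
      have h2 : ∀ᶠ ε in 𝓝[>] (0 : ℝ), ∀ σ ∈ S.cones, x + ε • v ∉ σ :=
        (eventually_all_finite S.finite).2 fun σ hσ => by simpa using hcon σ hσ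
      obtain ⟨ε, hε⟩ := h2.exists
      have : x + ε • v ∈ S.support := by rw [hc]; trivial
      simp only [RationalFan.support, Set.mem_iUnion] at this
      obtain ⟨σ, hσ, h⟩ := this
      exact hε σ hσ h
    have hσc := hBK σ hσ
    have hrep : ∀ ε : ℝ, ∀ i, (B σ).repr (x + ε • v) i = (B σ).repr x i + ε * (B σ).repr v i := by
      intro ε i; simp
    have hK : K σ = Finset.univ := by
      rw [Finset.eq_univ_iff_forall]
      intro i
      by_contra hi
      obtain ⟨ε, h1, h2⟩ := (hf.and_eventually
        (ev_ne ((B σ).repr x i) ((B σ).repr v i) (Or.inr (hv σ hσ i)))).exists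
      rw [hσc] at h1
      exact h2 (by rw [← hrep]; exact h1.2 i hi)
    have hpos : ∀ i, 0 ≤ (B σ).repr x i ∧ ((B σ).repr v i < 0 → 0 < (B σ).repr x i) := by
      intro i
      refine freq_nonneg _ _ (hf.mono fun ε hε => ?_)
      rw [hσc] at hε
      rw [← hrep]; exact hε.1 i
    have hxσ : x ∈ σ := by
      rw [hσc]
      exact ⟨fun i => (hpos i).1, fun i hi => by simp [hK] at hi⟩
    have hsub : τ ∩ σ = τ := by
      have h1 := S.inter_face τ hτ σ hσ
      have h2 : IsFaceOf (τ ∩ σ) (coneOf (B τ) (K τ)) := by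
        rw [← hBK τ hτ]; exact h1
      have := face_pos _ _ _ h2 x ⟨hxτ, hxσ⟩ (by
        intro i hi; rw [hxdef, repr_bary]; simp [hi])
      rw [← hBK τ hτ] at this
      exact this
    have hface : IsFaceOf τ (coneOf (B σ) (K σ)) := by
      have h1 := S.inter_face σ hσ τ hτ
      rw [Set.inter_comm, hsub] at h1
      rw [← hσc]; exact h1
    obtain ⟨I, _, hI⟩ := face_is_coneOf _ _ _ hface
    refine ⟨σ, hσ, hK, I, hI, fun i hi => ?_⟩
    by_contra hn
    rw [hI] at hxτ
    exact ((hpos i).2 hi).ne' (hxτ.2 i hn)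
  have hone : ∀ τ, ∀ σ ∈ S.cones, ∀ σ' ∈ S.cones, G τ σ → G τ σ' → σ ⊆ σ' := by
    rintro τ σ hσ σ' hσ' ⟨hK, I, hI, hN⟩ ⟨hK', I', hI', hN'⟩
    set x := bary (B σ) I + bary (B σ') I' with hx
    have h1 : bary (B σ) I ∈ τ := by rw [hI]; exact bary_mem _ _
    have h2 : bary (B σ') I' ∈ τ := by rw [hI']; exact bary_mem _ _
    have ev : ∀ᶠ ε in 𝓝[>] (0 : ℝ), ∀ i, 0 < (B σ).repr x i + ε * (B σ).repr v i := by
      refine eventually_all.2 fun i => ?_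
      rw [hI] at h2
      have e : (B σ).repr x i = (if i ∈ I then 1 else 0) + (B σ).repr (bary (B σ') I') i := by
        rw [← repr_bary (B σ) I i, hx]; simp
      have h0 := h2.1 i
      apply ev_pos2
      · rw [e]; split_ifs <;> linarith
      · rcases lt_or_gt_of_ne (hv σ hσ i) with h | h
        · left; rw [e, if_pos (hN i h)]; linarith
        · right; exact h
    have ev' : ∀ᶠ ε in 𝓝[>] (0 : ℝ), ∀ i, 0 < (B σ').repr x i + ε * (B σ').repr v i := by
      refine eventually_all.2 fun i => ?_
      rw [hI'] at h1
      have e : (B σ').repr x i = (B σ').repr (bary (B σ) I) i + (if i ∈ I' then 1 else 0) := by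
        rw [← repr_bary (B σ') I' i, hx]; simp
      have h0 := h1.1 i
      apply ev_pos2
      · rw [e]; split_ifs <;> linarith
      · rcases lt_or_gt_of_ne (hv σ' hσ' i) with h | h
        · left; rw [e, if_pos (hN' i h)]; linarith
        · right; exact h
    obtain ⟨ε, p, p'⟩ := (ev.and ev').exists
    have q : ∀ i, 0 < (B σ).repr (x + ε • v) i := by intro i; simpa using p i
    have q' : ∀ i, 0 < (B σ').repr (x + ε • v) i := by intro i; simpa using p' i
    have m1 : x + ε • v ∈ σ := by
      rw [hBK σ hσ]; exact ⟨fun i => (q i).le, fun i hi => by simp [hK] at hi⟩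
    have m2 : x + ε • v ∈ σ' := by
      rw [hBK σ' hσ']; exact ⟨fun i => (q' i).le, fun i hi => by simp [hK'] at hi⟩
    have f2 : IsFaceOf (σ ∩ σ') (coneOf (B σ) (K σ)) := by
      rw [← hBK σ hσ]; exact S.inter_face σ hσ σ' hσ'
    have := face_pos _ _ _ f2 _ ⟨m1, m2⟩ fun i _ => q i
    rw [← hBK σ hσ] at this
    exact Set.inter_eq_left.1 this
  have huniq : ∀ τ, ∀ σ ∈ S.cones, ∀ σ' ∈ S.cones, G τ σ → G τ σ' → σ = σ' :=
    fun τ σ h σ' h' g g' => Set.Subset.antisymm (hone τ σ h σ' h' g g') (hone τ σ' h' σ h g' g)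
  choose! g hgm hg using hex
  obtain ⟨C, hC⟩ := (S.finite.image fun σ => pairR (mσ σ) v).bddBelow
  refine ⟨C, fun m hm => ?_⟩
  have hfin : (subfanLE S φ m).Finite := S.finite.subset fun σ h => h.1
  rw [finsum_mem_eq_finite_toFinset_sum _ hfin,
    ← Finset.sum_fiberwise_of_maps_to (s := hfin.toFinset) (t := S.finite.toFinset) (g := g)
      (fun τ hτ => by
        simp only [Set.Finite.mem_toFinset] at hτ ⊢
        exact hgm τ hτ.1)] at hm
  obtain ⟨σ, hσ, hne⟩ := Finset.exists_ne_zero_of_sum_ne_zero hm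
  rw [Set.Finite.mem_toFinset] at hσ
  have hK : K σ = Finset.univ := by
    obtain ⟨τ, hτ, _⟩ := Finset.exists_ne_zero_of_sum_ne_zero hne
    simp only [Finset.mem_filter, Set.Finite.mem_toFinset] at hτ
    have := (hg τ hτ.1.1).1
    rwa [hτ.2] at this
  have hBσ : ∀ i, B σ i ∈ σ := by
    intro i
    have := (basis_mem_coneOf (B σ) (K σ) i).2 (by simp [hK])
    rwa [← hBK σ hσ] at this
  let N : Finset (Fin n) := Finset.univ.filter fun i => (B σ).repr v i < 0
  let A : Finset (Fin n) := Finset.univ.filter fun i => pairR m (B σ i) ≤ φ (B σ i)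
  have hfib : (hfin.toFinset.filter fun τ => g τ = σ) =
      (Finset.Icc N A).image fun I => coneOf (B σ) I := by
    ext τ
    simp only [Finset.mem_filter, Set.Finite.mem_toFinset, Finset.mem_image, Finset.mem_Icc]
    constructor
    · rintro ⟨hτ, rfl⟩
      obtain ⟨_, I, hI, hN⟩ := hg τ hτ.1
      refine ⟨I, ⟨fun i hi => hN i (Finset.mem_filter.1 hi).2, fun i hi => ?_⟩, hI.symm⟩
      refine Finset.mem_filter.2 ⟨Finset.mem_univ _, hτ.2 _ ?_⟩
      have h3 := (basis_mem_coneOf (B (g τ)) I i).2 hi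
      rwa [← hI] at h3
    · rintro ⟨I, ⟨h1, h2⟩, rfl⟩
      have hτ : coneOf (B σ) I ∈ S.cones := by
        apply S.face_mem σ hσ
        have := face_coneOf (B σ) (K σ) I (by simp [hK]) (hint σ hσ)
        rwa [← hBK σ hσ] at this
      have hG : G (coneOf (B σ) I) σ :=
        ⟨hK, I, rfl, fun i hi => h1 (Finset.mem_filter.2 ⟨Finset.mem_univ _, hi⟩)⟩
      refine ⟨⟨hτ, fun x hx => ?_⟩, huniq _ _ (hgm _ hτ) _ hσ (hg _ hτ) hG⟩
      have hxσ : x ∈ σ := by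
        rw [hBK σ hσ]; exact ⟨hx.1, fun i hi => by simp [hK] at hi⟩
      rw [hmσ σ hσ x hxσ, pairR_expand m (B σ) x, pairR_expand (mσ σ) (B σ) x]
      refine Finset.sum_le_sum fun i _ => ?_
      by_cases hi : i ∈ I
      · apply mul_le_mul_of_nonneg_left _ (hx.1 i)
        rw [← hmσ σ hσ _ (hBσ i)]
        exact (Finset.mem_filter.1 (h2 hi)).2
      · rw [hx.2 i hi]; simp
  rw [hfib, Finset.sum_image (fun I _ J _ h => coneOf_inj _ h)] at hne
  simp only [dim_coneOf] at hne
  have hNA : N = A := by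
    by_contra h
    exact hne (sum_Icc_zero N A h)
  refine (hC ⟨σ, hσ, rfl⟩).trans ?_
  change pairR (mσ σ) v ≤ pairR m v
  rw [pairR_expand m (B σ) v, pairR_expand (mσ σ) (B σ) v]
  refine Finset.sum_le_sum fun i _ => ?_
  rw [← hmσ σ hσ _ (hBσ i)]
  by_cases hi : i ∈ N
  · have h1 := (Finset.mem_filter.1 hi).2
    rw [hNA] at hi
    have h2 := (Finset.mem_filter.1 hi).2
    exact mul_le_mul_of_nonpos_left h2 h1.le
  · have h1 : ¬ (B σ).repr v i < 0 := fun h => hi (Finset.mem_filter.2 ⟨Finset.mem_univ _, h⟩)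
    rw [hNA] at hi
    have h2 : ¬ pairR m (B σ i) ≤ φ (B σ i) :=
      fun h => hi (Finset.mem_filter.2 ⟨Finset.mem_univ _, h⟩)
    push Not at h1 h2
    exact mul_le_mul_of_nonneg_left h2.le h1

open Filter Topology in
lemma exists_generic {n : ℕ} (S : RationalFan n)
    (B : Set (V n) → Module.Basis (Fin n) ℝ (V n)) :
    ∃ v : V n, ∀ σ ∈ S.cones, ∀ i, (B σ).repr v i ≠ 0 := by
  classical
  have hfin : (S.cones ×ˢ (Set.univ : Set (Fin n))).Finite := S.finite.prod Set.finite_univ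
  have := Subspace.biUnion_ne_univ_of_top_notMem (k := ℝ) (E := V n)
    (s := hfin.toFinset.image fun p => LinearMap.ker ((B p.1).coord p.2)) (by
      intro h
      obtain ⟨p, _, hp⟩ := Finset.mem_image.1 h
      have : B p.1 p.2 ∈ LinearMap.ker ((B p.1).coord p.2) := by rw [hp]; trivial
      simp at this)
  obtain ⟨v, hv⟩ := (Set.ne_univ_iff_exists_notMem _).1 this
  refine ⟨v, fun σ hσ i h => hv ?_⟩
  simp only [Set.mem_iUnion]
  refine ⟨LinearMap.ker ((B σ).coord i), Finset.mem_image.2 ⟨(σ, i), by simp [hσ], rfl⟩, ?_⟩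
  simpa using h

/-- **Statement 11.** For a complete unimodular fan `Σ` and `f ∈ PL(Σ)`, there are only
finitely many `m ∈ M` with `∑_{σ ∈ Σ_{f,m}} (-1)^{dim σ} ≠ 0`. -/
theorem finitely_many_nonzero_euler_sums {n : ℕ} (S : RationalFan n)
    (hS : IsUnimodular S) (hc : IsComplete S)
    (φ : V n → ℝ) (hφ : IsPLFun S φ) :
    {m : Fin n → ℤ |
      (∑ᶠ σ ∈ subfanLE S φ m, (-1 : ℤ) ^ dimCone σ) ≠ 0}.Finite := by
  have hd : ∀ σ, ∃ (B : Module.Basis (Fin n) ℝ (V n)) (K : Finset (Fin n)), σ ∈ S.cones →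
      (σ = coneOf B K ∧ ∀ i, ∃ m : Fin n → ℤ, ∀ v, B.repr v i = pairR m v) := by
    intro σ
    by_cases h : σ ∈ S.cones
    · obtain ⟨B, K, h1⟩ := unimod_data σ (hS.2 σ h)
      exact ⟨B, K, fun _ => h1⟩
    · exact ⟨Pi.basisFun ℝ (Fin n), ∅, fun h' => absurd h' h⟩
  choose B K hBK using hd
  have LB := lower_bound S hc φ hφ B K (fun σ h => (hBK σ h).1) (fun σ h => (hBK σ h).2)
  have both : ∀ v : V n, (∀ σ ∈ S.cones, ∀ i, (B σ).repr v i ≠ 0) → ∃ C : ℝ, ∀ m : Fin n → ℤ,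
      (∑ᶠ σ ∈ subfanLE S φ m, (-1 : ℤ) ^ dimCone σ) ≠ 0 → |pairR m v| ≤ C := by
    intro v hv
    obtain ⟨C1, h1⟩ := LB v hv
    obtain ⟨C2, h2⟩ := LB ((-1 : ℝ) • v) (fun σ hσ i => by simpa using hv σ hσ i)
    refine ⟨max (-C1) (-C2), fun m hm => abs_le.2 ⟨?_, ?_⟩⟩
    · have := h1 m hm
      have := le_max_left (-C1) (-C2)
      linarith
    · have h3 := h2 m hm
      rw [pairR_smul] at h3
      have := le_max_right (-C1) (-C2)
      linarith
  obtain ⟨v, hv⟩ := exists_generic S B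
  obtain ⟨C, hC⟩ := both v hv
  have hD : ∀ j : Fin n, ∃ D : ℤ, ∀ m : Fin n → ℤ,
      (∑ᶠ σ ∈ subfanLE S φ m, (-1 : ℤ) ^ dimCone σ) ≠ 0 → |m j| ≤ D := by
    intro j
    have ev : ∀ᶠ ε in nhdsWithin (0 : ℝ) (Set.Ioi 0), ∀ σ ∈ S.cones, ∀ i,
        (B σ).repr v i + ε * (B σ).repr (Pi.single j 1) i ≠ 0 :=
      (Filter.eventually_all_finite S.finite).2 fun σ hσ => Filter.eventually_all.2 fun i =>
        ev_ne _ _ (Or.inl (hv σ hσ i))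
    obtain ⟨ε, h1, hε⟩ := (ev.and self_mem_nhdsWithin).exists
    have hε0 : 0 < ε := hε
    obtain ⟨C', hC'⟩ := both (v + ε • (Pi.single j 1 : V n)) (fun σ hσ i => by
      simpa using h1 σ hσ i)
    refine ⟨⌈(C + C') / ε⌉, fun m hm => ?_⟩
    have a1 := abs_le.1 (hC m hm)
    have a2 := abs_le.1 (hC' m hm)
    have e : pairR m (Pi.single j 1 : V n) = m j := by
      simp [pairR, Pi.single_apply]
    rw [pairR_add, pairR_smul, e] at a2
    have : |(m j : ℝ)| ≤ (C + C') / ε := by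
      rw [le_div_iff₀ hε0]
      have h4 : |(m j : ℝ)| * ε = |(m j : ℝ) * ε| := by rw [abs_mul, abs_of_pos hε0]
      rw [h4, abs_le]
      constructor <;> nlinarith
    have h3 := this.trans (Int.le_ceil _)
    exact_mod_cast h3
  choose D hD using hD
  refine (Set.finite_Icc (fun j => - D j) D).subset fun m hm => ?_
  exact ⟨fun j => (abs_le.1 (hD j m hm)).1, fun j => (abs_le.1 (hD j m hm)).2⟩

end EhrhartFormalization
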